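/- Let W be a polynomial in N variables with rational coefficients and Γ a finite connected graph with half-edges h_1,…,h_N and legs with integer weights a_i. Then the sum Σ_w W(w(h_1),…,w(h_N)), taken over all functions w : halfedges → {0,…,r−1} satisfying conditions (R1)–(R3) modulo r, is a polynomial in r for all sufficiently large r, and this polynomial is divisible by r^{h^1(Γ)}. -/

import Mathlib

/-!
Fix one end of every edge: a weighting modulo `r` becomes a flow `x : E → ZMod r` with prescribed
boundary, and the weights of the half-edges become representatives of the `x e` in intervals
`[c, c + r)`. We sum polynomials in `r` and such representatives over the flows that are free on a
set `S` of edges and prescribed elsewhere.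

If `S` supports a nonzero integral cycle `z`, write `P = Q(· + z) - Q`. Translation by `z` permutes
the flows, so the sum of `P` is the change in the sum of `Q` when the cuts `c` move by `z`. Moving
one cut by one unit affects only the flows with a given value on one edge, whose representative
jumps by `r`; the change is therefore `r` times a sum over flows free on `S` minus that edge.
If `S` is a forest there is at most one flow, and it is the reduction of an integral flow that does
not depend on `r`. As a spanning forest has `|V| - |π₀|` edges, at least `h¹` factors `r` split off.
-/

namespace Pixton

open Filter MvPolynomial

section IcoLift

variable {r : ℕ}

/-- The representative of the residue class `z` modulo `r` in the interval `[c, c + r)`. -/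
def icoLift (c : ℤ) (z : ZMod r) : ℤ := c + (z - c).val

lemma icoLift_add_intCast (c k : ℤ) (z : ZMod r) :
    icoLift (c + k) (z + (k : ZMod r)) = icoLift c z + k := by
  simp only [icoLift, Int.cast_add, add_sub_add_right_eq_sub]
  ring

lemma icoLift_zero (z : ZMod r) : icoLift 0 z = z.val := by simp [icoLift]

lemma le_icoLift (c : ℤ) (z : ZMod r) : c ≤ icoLift c z := by
  rw [icoLift]
  omega

variable [NeZero r]

lemma intCast_icoLift (c : ℤ) (z : ZMod r) : (icoLift c z : ZMod r) = z := by simp [icoLift]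

lemma icoLift_lt (c : ℤ) (z : ZMod r) : icoLift c z < c + r := by
  have := ZMod.val_lt (z - (c : ZMod r))
  rw [icoLift]
  omega

lemma icoLift_intCast {c m : ℤ} (hcm : c ≤ m) (hmc : m < c + r) :
    icoLift c (m : ZMod r) = m := by
  have hval : ((m - c : ℤ) : ZMod r).val = m - c := by
    rw [ZMod.val_intCast, Int.emod_eq_of_lt] <;> omega
  rw [icoLift, ← Int.cast_sub, hval, add_sub_cancel]

lemma icoLift_self (c : ℤ) : icoLift c (c : ZMod r) = c :=
  icoLift_intCast le_rfl (by have := NeZero.pos r; omega)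

lemma icoLift_add_one_self (c : ℤ) : icoLift (c + 1) (c : ZMod r) = c + r := by
  have := NeZero.pos r
  rw [← icoLift_intCast (c := c + 1) (m := c + r) (r := r) (by omega) (by omega)]
  simp

lemma icoLift_add_one_of_ne {c : ℤ} {z : ZMod r} (hz : z ≠ c) :
    icoLift (c + 1) z = icoLift c z := by
  have hlift := intCast_icoLift c z
  have hne : icoLift c z ≠ c := fun h => hz (by rw [← hlift, h])
  have := le_icoLift c z
  have := icoLift_lt c z
  conv_lhs => rw [← hlift]
  exact icoLift_intCast (by omega) (by omega)

lemma icoLift_one (z : ZMod r) : icoLift 1 z = r - (-z).val := by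
  have := ZMod.val_lt (-z)
  rw [← icoLift_intCast (c := 1) (m := r - (-z).val) (r := r) (by omega) (by omega)]
  simp

end IcoLift

lemma eventually_natAbs_lt (a : ℤ) : ∀ᶠ r : ℕ+ in atTop, a.natAbs < r :=
  tendsto_PNat_val_atTop_atTop.eventually_gt_atTop _

lemma eventually_eq_of_intCast_eq (a b : ℤ) :
    ∀ᶠ r : ℕ+ in atTop, (a : ZMod r) = b → a = b := by
  filter_upwards [eventually_natAbs_lt (b - a)] with r hr hab
  rw [ZMod.intCast_eq_intCast_iff_dvd_sub] at hab
  have hsub : b - a = 0 := Int.eq_zero_of_abs_lt_dvd hab (by rw [Int.abs_eq_natAbs]; omega)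
  omega

lemma eventually_icoLift_intCast (c w : ℤ) :
    ∀ᶠ r : ℕ+ in atTop, icoLift c (w : ZMod r) = if c ≤ w then w else w + r := by
  filter_upwards [eventually_natAbs_lt (c - w)] with r hr
  split_ifs
  · exact icoLift_intCast (by omega) (by omega)
  · rw [← icoLift_intCast (c := c) (m := w + r) (r := r) (by omega) (by omega)]
    simp

section Polynomial

variable {σ τ R A : Type*}

lemma dvd_algHom_sub_algHom [CommRing R] [CommRing A] [Algebra R A] {a : A}
    {φ ψ : MvPolynomial σ R →ₐ[R] A} (h : ∀ i, a ∣ φ (X i) - ψ (X i)) (P : MvPolynomial σ R) :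
    a ∣ φ P - ψ P := by
  let π := Ideal.Quotient.mkₐ R (Ideal.span {a})
  have hπ (x y : A) : π x = π y ↔ a ∣ x - y := by
    rw [Ideal.Quotient.mkₐ_eq_mk, Ideal.Quotient.eq, Ideal.mem_span_singleton]
  have hcomp : π.comp φ = π.comp ψ := algHom_ext fun i => (hπ _ _).2 (h i)
  exact (hπ _ _).1 (DFunLike.congr_fun hcomp P)

lemma eval_bind₁ [CommSemiring R] (y : τ → R) (f : σ → MvPolynomial τ R) (P : MvPolynomial σ R) :
    eval y (bind₁ f P) = eval (fun i => eval y (f i)) P :=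
  eval₂Hom_bind₁ _ _ _ _

/-- Substitution of `q` for the single variable `X i`. -/
noncomputable def substVar [CommSemiring R] [DecidableEq σ] (i : σ) (q : MvPolynomial σ R) :
    MvPolynomial σ R →ₐ[R] MvPolynomial σ R :=
  bind₁ (Function.update X i q)

lemma eval_substVar [CommSemiring R] [DecidableEq σ] (y : σ → R) (i : σ) (q P : MvPolynomial σ R) :
    eval y (substVar i q P) = eval (Function.update y i (eval y q)) P := by
  rw [substVar, eval_bind₁]
  congr 2 with j
  obtain rfl | hj := eq_or_ne j i <;> simp [*]

lemma dvd_substVar_sub_substVar [CommRing R] [DecidableEq σ] (i : σ) (p q P : MvPolynomial σ R) :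
    p - q ∣ substVar i p P - substVar i q P := by
  refine dvd_algHom_sub_algHom (fun j => ?_) P
  obtain rfl | hj := eq_or_ne j i <;> simp [substVar, *]

/-- The translation `P(X) ↦ P(X + z)`. -/
noncomputable def translate [CommSemiring R] (z : σ → R) :
    MvPolynomial σ R →ₐ[R] MvPolynomial σ R :=
  bind₁ fun i => X i + C (z i)

lemma eval_translate [CommSemiring R] (y z : σ → R) (P : MvPolynomial σ R) :
    eval y (translate z P) = eval (y + z) P := by
  rw [translate, eval_bind₁]
  congr 2 with i
  simp

lemma translate_C [CommSemiring R] (z : σ → R) (a : R) : translate z (C a) = C a := by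
  simp [translate]

lemma translate_X [CommSemiring R] (z : σ → R) (i : σ) : translate z (X i) = X i + C (z i) := by
  simp [translate]

lemma exists_translate_sub_eq_C_mul_pow {z : σ → ℚ} {i : σ} (hi : z i ≠ 0) (a : ℚ) (n : ℕ) :
    ∃ Q, translate z Q - Q = C a * X i ^ n := by
  let y : MvPolynomial σ ℚ := C (z i)⁻¹ * X i
  let B := Polynomial.aeval y (Polynomial.bernoulli (n + 1))
  have hy : translate z y = Polynomial.aeval y (1 + Polynomial.X : Polynomial ℚ) := by
    simp only [y, map_mul, translate_C, translate_X, mul_add, ← C_mul, inv_mul_cancel₀ hi]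
    simp [add_comm]
  have hB : translate z B - B = C ((n : ℚ) + 1) * y ^ n := by
    rw [← Polynomial.aeval_algHom_apply, hy, ← Polynomial.aeval_comp,
      Polynomial.bernoulli_comp_one_add_X]
    simp [B]
  have hX : C (z i) * y = X i := by rw [← mul_assoc, ← C_mul, mul_inv_cancel₀ hi, C_1, one_mul]
  have hn : (n + 1 : ℚ) ≠ 0 := by positivity
  refine ⟨C (a * z i ^ n / (n + 1)) * B, ?_⟩
  calc translate z (C (a * z i ^ n / (n + 1)) * B) - C (a * z i ^ n / (n + 1)) * B
      = C (a * z i ^ n / (n + 1)) * C ((n : ℚ) + 1) * y ^ n := by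
        rw [map_mul, translate_C, ← mul_sub, hB, mul_assoc]
    _ = C a * (C (z i) * y) ^ n := by
        rw [← C_mul, div_mul_cancel₀ _ hn, C_mul, C_pow, mul_assoc, mul_pow (C (z i))]
    _ = C a * X i ^ n := by rw [hX]

-- Each `X j - (z j / z i) X i` is translation invariant, so one may solve monomial by monomial,
-- trading the other variables for powers of `X i`.
lemma exists_translate_sub_eq_mul_pow {z : σ → ℚ} {i : σ} (hi : z i ≠ 0) (P : MvPolynomial σ ℚ)
    (n : ℕ) : ∃ Q, translate z Q - Q = P * X i ^ n := by
  induction P using MvPolynomial.induction_on generalizing n with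
  | C a => exact exists_translate_sub_eq_C_mul_pow hi a n
  | add p q hp hq =>
    obtain ⟨Q, hQ⟩ := hp n
    obtain ⟨Q', hQ'⟩ := hq n
    exact ⟨Q + Q', by rw [map_add, add_mul, ← hQ, ← hQ']; ring⟩
  | mul_X p j hp =>
    obtain ⟨Q, hQ⟩ := hp n
    obtain ⟨Q', hQ'⟩ := hp (n + 1)
    let Y : MvPolynomial σ ℚ := X j - C (z j / z i) * X i
    have hY : translate z Y = Y := by
      simp only [Y, map_sub, map_mul, translate_C, translate_X, mul_add, ← C_mul,
        div_mul_cancel₀ _ hi]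
      ring
    refine ⟨Y * Q + C (z j / z i) * Q', ?_⟩
    calc translate z (Y * Q + C (z j / z i) * Q') - (Y * Q + C (z j / z i) * Q')
        = Y * (translate z Q - Q) + C (z j / z i) * (translate z Q' - Q') := by
          rw [map_add, map_mul, map_mul, hY, translate_C]; ring
      _ = p * X j * X i ^ n := by rw [hQ, hQ']; simp only [Y]; ring

lemma exists_translate_sub_eq {z : σ → ℚ} (hz : z ≠ 0) (P : MvPolynomial σ ℚ) :
    ∃ Q, translate z Q - Q = P := by
  obtain ⟨i, hi⟩ := Function.ne_iff.1 hz
  simpa using exists_translate_sub_eq_mul_pow hi P 0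

end Polynomial

/-- The functions of a positive integer `r` that agree for all large `r` with a polynomial
in `r` divisible by `r ^ d`. -/
def eventuallyPolynomial (d : ℕ) : Submodule ℚ (ℕ+ → ℚ) where
  carrier := {f | ∃ p : Polynomial ℚ, Polynomial.X ^ d ∣ p ∧ ∀ᶠ r in atTop, f r = p.eval (r : ℚ)}
  zero_mem' := ⟨0, dvd_zero _, by simp⟩
  add_mem' := by
    rintro f g ⟨p, hp, hf⟩ ⟨q, hq, hg⟩
    refine ⟨p + q, dvd_add hp hq, ?_⟩
    filter_upwards [hf, hg] with r hfr hgr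
    simp [hfr, hgr]
  smul_mem' := by
    rintro a f ⟨p, hp, hf⟩
    refine ⟨Polynomial.C a * p, hp.mul_left _, ?_⟩
    filter_upwards [hf] with r hfr
    simp [hfr]

lemma eventuallyPolynomial_anti : Antitone eventuallyPolynomial := by
  rintro d d' hd f ⟨p, hp, hf⟩
  exact ⟨p, (pow_dvd_pow _ hd).trans hp, hf⟩

lemma mul_mem_eventuallyPolynomial {d : ℕ} {f : ℕ+ → ℚ} (hf : f ∈ eventuallyPolynomial d) :
    (fun r : ℕ+ => (r : ℚ) * f r) ∈ eventuallyPolynomial (d + 1) := by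
  obtain ⟨p, hp, hf⟩ := hf
  refine ⟨Polynomial.X * p, pow_succ' (Polynomial.X : Polynomial ℚ) d ▸ mul_dvd_mul_left _ hp, ?_⟩
  filter_upwards [hf] with r hfr
  simp [hfr]

lemma eval_mem_eventuallyPolynomial {σ : Type*} [Finite σ] {y : ℕ+ → σ → ℚ}
    (hy : ∀ i, (y · i) ∈ eventuallyPolynomial 0) (P : MvPolynomial σ ℚ) :
    (fun r => eval (y r) P) ∈ eventuallyPolynomial 0 := by
  choose p _ hp using hy
  refine ⟨aeval p P, by simp, ?_⟩
  filter_upwards [eventually_all.2 hp] with r hr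
  rw [funext hr]
  exact (comp_aeval_apply p (Polynomial.aeval (r : ℚ)) P).symm

/-- The translations `z` under which `f` is invariant modulo `N`. -/
def quasiperiods {G M : Type*} [AddCommGroup G] [AddCommGroup M] (f : G → M) (N : AddSubgroup M) :
    AddSubgroup G where
  carrier := {z | ∀ c, f (c + z) - f c ∈ N}
  zero_mem' := by simp [N.zero_mem]
  add_mem' := by
    intro y z hy hz c
    simpa [add_assoc] using N.add_mem (hz (c + y)) (hy c)
  neg_mem' := by
    intro z hz c
    simpa [sub_eq_add_neg] using N.neg_mem (hz (c - z))

lemma card_connectedComponent_eq_one {V : Type*} {G : SimpleGraph V} (hG : G.Connected) :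
    Nat.card G.ConnectedComponent = 1 :=
  Nat.card_eq_one_iff_unique.2
    ⟨hG.preconnected.subsingleton_connectedComponent, hG.nonempty.map G.connectedComponentMk⟩

section Boundary

variable {V E : Type*} [DecidableEq V] (A : Type*) [CommRing A] (ends : E → V × V)

/-- The boundary of the edge `e`, oriented from its second end to its first. -/
def edgeBoundary (e : E) : V → A := Pi.single (ends e).1 1 - Pi.single (ends e).2 1

variable {A}

lemma dotProduct_edgeBoundary [Fintype V] (φ : V → A) (e : E) :
    φ ⬝ᵥ edgeBoundary A ends e = φ (ends e).1 - φ (ends e).2 := by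
  simp [edgeBoundary, dotProduct_sub]

variable (A) [Fintype E]

/-- The boundary map from `1`-chains (functions on edges) to `0`-chains (functions on vertices)
of the oriented multigraph `ends`. -/
def boundary : (E → A) →ₗ[A] V → A := Fintype.linearCombination A (edgeBoundary A ends)

variable {A}

lemma boundary_eq_sum (x : E → A) : boundary A ends x = ∑ e, x e • edgeBoundary A ends e :=
  Fintype.linearCombination_apply ..

lemma boundary_apply (x : E → A) (v : V) : boundary A ends x v =
    ∑ e, ((if (ends e).1 = v then x e else 0) - (if (ends e).2 = v then x e else 0)) := by
  simp [boundary_eq_sum, edgeBoundary, Pi.single_apply, mul_sub, eq_comm]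

lemma boundary_intCast (w : E → ℤ) :
    boundary A ends (fun e => (w e : A)) = fun v => (boundary ℤ ends w v : A) := by
  ext v
  simp [boundary_apply, apply_ite (Int.cast : ℤ → A)]

lemma dotProduct_boundary [Fintype V] (φ : V → A) (x : E → A) :
    φ ⬝ᵥ boundary A ends x = ∑ e, x e * (φ (ends e).1 - φ (ends e).2) := by
  simp [boundary_eq_sum, dotProduct_sum, dotProduct_smul, dotProduct_edgeBoundary]

lemma finrank_range_boundary_add_card_le {C : Type*} [Fintype V] [Fintype C] {comp : V → C}
    (hcomp : Function.Surjective comp) (hends : ∀ e, comp (ends e).1 = comp (ends e).2) :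
    Module.finrank ℤ (boundary ℤ ends).range + Fintype.card C ≤ Fintype.card V := by
  classical
  let push : (V → ℤ) →ₗ[ℤ] C → ℤ := Fintype.linearCombination ℤ fun v => Pi.single (comp v) 1
  have hpush (v : V) : push (Pi.single v 1) = Pi.single (comp v) 1 := by simp [push]
  have hker : (boundary ℤ ends).range ≤ push.ker := by
    rw [boundary, Fintype.range_linearCombination, Submodule.span_le]
    rintro _ ⟨e, rfl⟩
    simp [edgeBoundary, hpush, hends]
  have hsurj : Function.Surjective push := by
    rw [← LinearMap.range_eq_top, Fintype.range_linearCombination, ← (Pi.basisFun ℤ C).span_eq]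
    congr 1
    ext f
    simp [hcomp.exists]
  have hrank := push.ker.finrank_quotient_add_finrank
  rw [(push.quotKerEquivOfSurjective hsurj).finrank_eq, Module.finrank_fintype_fun_eq_card,
    Module.finrank_fintype_fun_eq_card] at hrank
  have := Submodule.finrank_mono hker
  omega

lemma finrank_range_boundary_add_card_connectedComponent_le [Fintype V] :
    Module.finrank ℤ (boundary ℤ ends).range +
      Nat.card (SimpleGraph.fromRel fun u v => ∃ e, ends e = (u, v)).ConnectedComponent ≤
      Fintype.card V := by
  classical
  let G := SimpleGraph.fromRel fun u v => ∃ e, ends e = (u, v)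
  have hends (e : E) : G.connectedComponentMk (ends e).1 = G.connectedComponentMk (ends e).2 := by
    by_cases hloop : (ends e).1 = (ends e).2
    · rw [hloop]
    · exact SimpleGraph.ConnectedComponent.connectedComponentMk_eq_of_adj
        ((SimpleGraph.fromRel_adj ..).2 ⟨hloop, .inl ⟨e, rfl⟩⟩)
  rw [Nat.card_eq_fintype_card]
  exact finrank_range_boundary_add_card_le ends Quot.mk_surjective hends

lemma card_le_finrank_range_boundary [Finite V] {S : Finset E}
    (hS : LinearIndepOn ℤ (edgeBoundary ℤ ends) S) :
    S.card ≤ Module.finrank ℤ (boundary ℤ ends).range := by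
  have hind : LinearIndependent ℤ fun e : S => edgeBoundary ℤ ends e := hS
  have hspan : Submodule.span ℤ (Set.range fun e : S => edgeBoundary ℤ ends e) ≤
      (boundary ℤ ends).range := by
    rw [boundary, Fintype.range_linearCombination]
    exact Submodule.span_mono (Set.range_comp_subset_range Subtype.val (edgeBoundary ℤ ends))
  rw [← Fintype.card_coe S, ← finrank_span_eq_card hind]
  exact Submodule.finrank_mono hspan

lemma exists_cycle_of_not_linearIndepOn {S : Finset E}
    (hS : ¬ LinearIndepOn ℤ (edgeBoundary ℤ ends) S) :
    ∃ z : E → ℤ, boundary ℤ ends z = 0 ∧ (∀ e ∉ S, z e = 0) ∧ z ≠ 0 := by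
  classical
  obtain ⟨z, hz, i, hiS, hi⟩ := not_linearIndepOn_finset_iff.1 hS
  refine ⟨fun e => if e ∈ S then z e else 0, ?_, fun e he => if_neg he, ?_⟩
  · simpa [boundary_eq_sum] using hz
  · exact Function.ne_iff.2 ⟨i, by simpa [hiS] using hi⟩

end Boundary

section Cut

variable {V E : Type*} [DecidableEq V] {ends : E → V × V}

-- The potential is the indicator of the vertices homologous to the first end of `e` along the
-- edges of `T`, that is, of one side of a cut through `e` avoiding `T`.
lemma exists_potential_of_notMem_span {T : Set E} {e : E}
    (he : edgeBoundary ℤ ends e ∉ Submodule.span ℤ (edgeBoundary ℤ ends '' T)) :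
    ∃ φ : V → ℤ, φ (ends e).1 - φ (ends e).2 = 1 ∧ ∀ f ∈ T, φ (ends f).1 = φ (ends f).2 := by
  classical
  let N := Submodule.span ℤ (edgeBoundary ℤ ends '' T)
  let δ : V → V → ℤ := fun v => Pi.single v 1
  refine ⟨fun v => if δ (ends e).1 - δ v ∈ N then 1 else 0, ?_, fun f hf => ?_⟩
  · have hsnd : δ (ends e).1 - δ (ends e).2 ∉ N := he
    simp [hsnd]
  · have hf : δ (ends f).1 - δ (ends f).2 ∈ N := Submodule.subset_span ⟨f, hf, rfl⟩
    have hiff : δ (ends e).1 - δ (ends f).1 ∈ N ↔ δ (ends e).1 - δ (ends f).2 ∈ N := by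
      rw [← N.add_mem_iff_left hf, sub_add_sub_cancel]
    simp [hiff]

lemma exists_dual_potential [DecidableEq E] {S : Finset E}
    (hS : LinearIndepOn ℤ (edgeBoundary ℤ ends) S) {e : E} (he : e ∈ S) :
    ∃ φ : V → ℤ, ∀ f ∈ S, φ (ends f).1 - φ (ends f).2 = if f = e then 1 else 0 := by
  obtain ⟨φ, hφe, hφ⟩ := exists_potential_of_notMem_span (hS.notMem_span he)
  refine ⟨φ, fun f hf => ?_⟩
  split_ifs with hfe
  · rw [hfe, hφe]
  · rw [hφ f ⟨hf, hfe⟩, sub_self]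

end Cut

section Flow

variable {V E : Type*} [Fintype V] [DecidableEq V] [Fintype E] [DecidableEq E]
  {ends : E → V × V} {r : ℕ} [NeZero r] {b : V → ℤ} {S : Finset E} {t : E → ℤ}

variable (ends r b S t) in
/-- The flows modulo `r` with boundary `b` whose values outside `S` are prescribed by `t`. -/
def flows : Finset (E → ZMod r) :=
  {x | (boundary (ZMod r) ends x = fun v => (b v : ZMod r)) ∧ ∀ e ∉ S, x e = t e}

lemma mem_flows {x : E → ZMod r} : x ∈ flows ends r b S t ↔
    (boundary (ZMod r) ends x = fun v => (b v : ZMod r)) ∧ ∀ e ∉ S, x e = t e := by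
  simp [flows]

lemma filter_flows_eq {i : E} (hi : i ∈ S) (k : ℤ) :
    {x ∈ flows ends r b S t | x i = (k : ZMod r)} =
      flows ends r b (S.erase i) (Function.update t i k) := by
  ext x
  simp only [Finset.mem_filter, mem_flows, Finset.mem_erase, and_assoc]
  refine and_congr_right fun _ => ⟨fun ⟨hx, hxi⟩ e he => ?_, fun hx => ⟨fun e he => ?_, ?_⟩⟩
  · obtain rfl | hei := eq_or_ne e i
    · simpa using hxi
    · simpa [hei] using hx e (by simpa [hei] using he)
  · simpa [ne_of_mem_of_not_mem hi he |>.symm] using hx e (by simp [he])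
  · simpa using hx i (by simp)

lemma add_intCast_mem_flows_iff {z : E → ℤ} (hz : boundary ℤ ends z = 0)
    (hzS : ∀ e ∉ S, z e = 0) {x : E → ZMod r} :
    x + (fun e => (z e : ZMod r)) ∈ flows ends r b S t ↔ x ∈ flows ends r b S t := by
  rw [mem_flows, mem_flows, map_add, boundary_intCast, hz]
  refine and_congr (by simp [← Pi.zero_def]) (forall₂_congr fun e he => ?_)
  simp [hzS e he]

lemma apply_eq_of_mem_flows {φ : V → ℤ} {e : E} (he : e ∈ S)
    (hφ : ∀ f ∈ S, φ (ends f).1 - φ (ends f).2 = if f = e then 1 else 0)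
    {x : E → ZMod r} (hx : x ∈ flows ends r b S t) :
    x e = (φ ⬝ᵥ b - ∑ f ∈ Sᶜ, t f * (φ (ends f).1 - φ (ends f).2) : ℤ) := by
  obtain ⟨hxb, hxt⟩ := mem_flows.1 hx
  have hpair := dotProduct_boundary ends (fun v => (φ v : ZMod r)) x
  have hS : ∑ f ∈ S, x f * ((φ (ends f).1 : ZMod r) - φ (ends f).2) = x e := by
    calc ∑ f ∈ S, x f * ((φ (ends f).1 : ZMod r) - φ (ends f).2)
        = ∑ f ∈ S, if f = e then x f else 0 := Finset.sum_congr rfl fun f hf => by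
          rw [← Int.cast_sub, hφ f hf]
          split_ifs <;> simp
      _ = x e := by rw [Finset.sum_ite_eq' S e x, if_pos he]
  have hSc : ∑ f ∈ Sᶜ, x f * ((φ (ends f).1 : ZMod r) - φ (ends f).2) =
      ∑ f ∈ Sᶜ, (t f : ZMod r) * (φ (ends f).1 - φ (ends f).2) :=
    Finset.sum_congr rfl fun f hf => by rw [hxt f (Finset.mem_compl.1 hf)]
  rw [hxb, ← Finset.sum_add_sum_compl S, hS, hSc] at hpair
  rw [eq_sub_of_add_eq hpair.symm]
  simp [dotProduct]

variable (b t) in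
lemma exists_eq_intCast_of_mem_flows (hS : LinearIndepOn ℤ (edgeBoundary ℤ ends) S) :
    ∃ w : E → ℤ, (∀ e ∉ S, w e = t e) ∧
      ∀ (r : ℕ) [NeZero r], ∀ x ∈ flows ends r b S t, x = fun e => (w e : ZMod r) := by
  choose φ hφ using fun e : S => exists_dual_potential hS e.2
  refine ⟨fun e => if he : e ∈ S then
    φ ⟨e, he⟩ ⬝ᵥ b - ∑ f ∈ Sᶜ, t f * (φ ⟨e, he⟩ (ends f).1 - φ ⟨e, he⟩ (ends f).2)
    else t e, fun e he => dif_neg he, fun r _ x hx => funext fun e => ?_⟩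
  dsimp only
  split_ifs with he
  · exact apply_eq_of_mem_flows he (hφ ⟨e, he⟩) hx
  · exact (mem_flows.1 hx).2 e he

lemma eventually_boundary_eq_of_mem_flows (w : E → ℤ) : ∀ᶠ r : ℕ+ in atTop,
    (fun e => (w e : ZMod r)) ∈ flows ends r b S t → boundary ℤ ends w = b := by
  filter_upwards [eventually_all.2 fun v => eventually_eq_of_intCast_eq (boundary ℤ ends w v) (b v)]
    with r hr hw
  have hwb := (mem_flows.1 hw).1
  rw [boundary_intCast] at hwb
  exact funext fun v => hr v (congrFun hwb v)

variable (b t) in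
lemma flows_eq_singleton_or_eventually_eq_empty (hS : LinearIndepOn ℤ (edgeBoundary ℤ ends) S) :
    (∃ w : E → ℤ, ∀ (r : ℕ) [NeZero r], flows ends r b S t = {fun e => (w e : ZMod r)}) ∨
      ∀ᶠ r : ℕ+ in atTop, flows ends r b S t = ∅ := by
  obtain ⟨w, hwt, hw⟩ := exists_eq_intCast_of_mem_flows b t hS
  by_cases hwb : boundary ℤ ends w = b
  · refine .inl ⟨w, fun r _ => Finset.eq_singleton_iff_unique_mem.2 ⟨mem_flows.2 ⟨?_, ?_⟩, hw r⟩⟩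
    · rw [boundary_intCast, hwb]
    · exact fun e he => by rw [hwt e he]
  · refine .inr ?_
    filter_upwards [eventually_boundary_eq_of_mem_flows (ends := ends) (S := S) (t := t) w]
      with r hr
    exact Finset.eq_empty_of_forall_notMem fun x hx => hwb (hr (hw r x hx ▸ hx))

end Flow

section FlowPoint

variable {E H : Type*} {edge : H → E} {r : ℕ} {c : H → ℤ} {x : E → ZMod r} {h : H}

/-- The values, for a flow `x` modulo `r`, of the variables of the polynomials summed over flows:
`none` stands for `r`, and `some h` for the representative of `x (edge h)` in
`[c h, c h + r)`. -/
def flowPoint (edge : H → E) (c : H → ℤ) (x : E → ZMod r) : Option H → ℚ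
  | none => r
  | some h => icoLift (c h) (x (edge h))

lemma flowPoint_add (c : H → ℤ) (x : E → ZMod r) (z : E → ℤ) :
    flowPoint edge (c + z ∘ edge) (x + fun e => (z e : ZMod r)) =
      flowPoint edge c x + fun o => o.elim 0 fun h => (z (edge h) : ℚ) := by
  ext (_ | h)
  · simp [flowPoint]
  · simp [flowPoint, icoLift_add_intCast]

lemma flowPoint_intCast_mem_eventuallyPolynomial (w : E → ℤ) (o : Option H) :
    (fun r : ℕ+ => flowPoint edge c (fun e => (w e : ZMod r)) o) ∈ eventuallyPolynomial 0 := by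
  rcases o with _ | h
  · exact ⟨Polynomial.X, by simp, by simp [flowPoint]⟩
  · refine ⟨Polynomial.C (w (edge h) : ℚ) + if c h ≤ w (edge h) then 0 else Polynomial.X,
      by simp, ?_⟩
    filter_upwards [eventually_icoLift_intCast (c h) (w (edge h))] with r hr
    rw [flowPoint, hr]
    split_ifs <;> simp

variable [NeZero r] [DecidableEq H]

lemma flowPoint_add_single_of_ne (hx : x (edge h) ≠ c h) :
    flowPoint edge (c + Pi.single h 1) x = flowPoint edge c x := by
  ext (_ | h')
  · rfl
  · obtain rfl | hh := eq_or_ne h' h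
    · simp [flowPoint, icoLift_add_one_of_ne hx]
    · simp [flowPoint, hh]

lemma flowPoint_add_single_of_eq (hx : x (edge h) = c h) :
    flowPoint edge (c + Pi.single h 1) x =
      Function.update (flowPoint edge c x) (some h) (c h + r) := by
  ext (_ | h')
  · simp [flowPoint]
  · obtain rfl | hh := eq_or_ne h' h
    · simp [flowPoint, hx, icoLift_add_one_self]
    · simp [flowPoint, hh]

lemma eval_flowPoint_add_single_sub (hx : x (edge h) = c h) {Q Q' : MvPolynomial (Option H) ℚ}
    (hQ' : substVar (some h) (C (c h : ℚ) + X none) Q - substVar (some h) (C (c h : ℚ)) Q =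
      X none * Q') :
    eval (flowPoint edge (c + Pi.single h 1) x) Q - eval (flowPoint edge c x) Q =
      r * eval (flowPoint edge c x) Q' := by
  have hself : Function.update (flowPoint edge c x) (some h) (c h : ℚ) = flowPoint edge c x := by
    rw [Function.update_eq_self_iff, flowPoint, hx, icoLift_self]
  have heval := congrArg (eval (flowPoint edge c x)) hQ'
  rw [map_sub, eval_substVar, eval_substVar, map_mul, map_add, eval_C, eval_X, hself] at heval
  rw [flowPoint_add_single_of_eq hx]
  exact heval

end FlowPoint

section FlowSum

variable {V E H : Type*} [Fintype V] [DecidableEq V] [Fintype E] [DecidableEq E]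
  {ends : E → V × V} {b : V → ℤ} {S : Finset E} {t : E → ℤ} {edge : H → E} {c : H → ℤ}

variable (ends b S t edge c) in
/-- The sum of the polynomial `P` over the flows modulo `r`, as a function of `r`; the variables
of `P` are interpreted by `flowPoint`. -/
noncomputable def flowSum (P : MvPolynomial (Option H) ℚ) (r : ℕ+) : ℚ :=
  ∑ x ∈ flows ends r b S t, eval (flowPoint edge c x) P

lemma flowSum_sub (P Q : MvPolynomial (Option H) ℚ) :
    flowSum ends b S t edge c (P - Q) =
      flowSum ends b S t edge c P - flowSum ends b S t edge c Q := by
  ext r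
  simp [flowSum]

lemma flowSum_add_cycle {z : E → ℤ} (hz : boundary ℤ ends z = 0) (hzS : ∀ e ∉ S, z e = 0)
    (Q : MvPolynomial (Option H) ℚ) :
    flowSum ends b S t edge (c + z ∘ edge) Q =
      flowSum ends b S t edge c (translate (fun o => o.elim 0 fun h => (z (edge h) : ℚ)) Q) := by
  ext r
  refine (Finset.sum_equiv (Equiv.addRight fun e => (z e : ZMod r)) (fun x => ?_) ?_).symm
  · exact (add_intCast_mem_flows_iff hz hzS).symm
  · intro x _
    rw [eval_translate, ← flowPoint_add]
    rfl

-- Raising `c h` by one only affects the flows with value `c h` on `edge h`: there the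
-- representative jumps from `c h` to `c h + r`.
lemma exists_flowSum_add_single_sub_eq [DecidableEq H] {h : H} (hS : edge h ∈ S)
    (Q : MvPolynomial (Option H) ℚ) :
    ∃ Q', flowSum ends b S t edge (c + Pi.single h 1) Q - flowSum ends b S t edge c Q =
      fun r : ℕ+ => (r : ℚ) *
        flowSum ends b (S.erase (edge h)) (Function.update t (edge h) (c h)) edge c Q' r := by
  obtain ⟨Q', hQ'⟩ := dvd_substVar_sub_substVar (some h) (C (c h : ℚ) + X none) (C (c h : ℚ)) Q
  rw [add_sub_cancel_left] at hQ'
  refine ⟨Q', funext fun r => ?_⟩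
  rw [Pi.sub_apply, flowSum, flowSum, flowSum, ← Finset.sum_sub_distrib, ← filter_flows_eq hS,
    Finset.mul_sum, Finset.sum_filter]
  refine Finset.sum_congr rfl fun x _ => ?_
  split_ifs with hx
  · exact eval_flowPoint_add_single_sub hx hQ'
  · rw [flowPoint_add_single_of_ne hx, sub_self]

lemma exists_flowSum_eq_flowSum_add_cycle_sub (hedge : Function.Surjective edge) {z : E → ℤ}
    (hz : boundary ℤ ends z = 0) (hzS : ∀ e ∉ S, z e = 0) (hz0 : z ≠ 0)
    (P : MvPolynomial (Option H) ℚ) :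
    ∃ Q, flowSum ends b S t edge c P =
      flowSum ends b S t edge (c + z ∘ edge) Q - flowSum ends b S t edge c Q := by
  have hne : (fun o : Option H => o.elim (0 : ℚ) fun h => (z (edge h) : ℚ)) ≠ 0 := by
    obtain ⟨e, he⟩ := Function.ne_iff.1 hz0
    obtain ⟨h, rfl⟩ := hedge e
    exact Function.ne_iff.2 ⟨some h, by simpa using he⟩
  obtain ⟨Q, rfl⟩ := exists_translate_sub_eq hne P
  exact ⟨Q, by rw [flowSum_add_cycle hz hzS, flowSum_sub]⟩

variable [Finite H]

lemma flowSum_mem_eventuallyPolynomial_of_linearIndepOn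
    (hS : LinearIndepOn ℤ (edgeBoundary ℤ ends) S) (P : MvPolynomial (Option H) ℚ) :
    flowSum ends b S t edge c P ∈ eventuallyPolynomial 0 := by
  obtain ⟨w, hw⟩ | hempty := flows_eq_singleton_or_eventually_eq_empty b t hS
  · convert eval_mem_eventuallyPolynomial
      (flowPoint_intCast_mem_eventuallyPolynomial (edge := edge) (c := c) w) P using 2 with r
    rw [flowSum, hw, Finset.sum_singleton]
  · refine ⟨0, dvd_zero _, ?_⟩
    filter_upwards [hempty] with r hr
    simp [flowSum, hr]

lemma flowSum_add_sub_mem_eventuallyPolynomial {d : ℕ}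
    (hdel : ∀ i ∈ S, ∀ t c P, flowSum ends b (S.erase i) t edge c P ∈ eventuallyPolynomial d)
    {z : H → ℤ} (hz : ∀ h, edge h ∉ S → z h = 0) (Q : MvPolynomial (Option H) ℚ) :
    flowSum ends b S t edge (c + z) Q - flowSum ends b S t edge c Q ∈
      eventuallyPolynomial (d + 1) := by
  classical
  have := Fintype.ofFinite H
  let f (c : H → ℤ) : ℕ+ → ℚ := flowSum ends b S t edge c Q
  suffices z ∈ quasiperiods f (eventuallyPolynomial (d + 1)).toAddSubgroup from this c
  rw [← Finset.univ_sum_single z]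
  refine sum_mem fun h _ => ?_
  by_cases hS : edge h ∈ S
  · have hsingle : Pi.single h 1 ∈ quasiperiods f (eventuallyPolynomial (d + 1)).toAddSubgroup := by
      intro c
      obtain ⟨Q', hQ'⟩ := exists_flowSum_add_single_sub_eq (ends := ends) (b := b) (t := t)
        (c := c) hS Q
      exact hQ' ▸ mul_mem_eventuallyPolynomial (hdel _ hS _ _ _)
    have hsmul := zsmul_mem hsingle (z h)
    rwa [← Pi.single_smul, smul_eq_mul, mul_one] at hsmul
  · rw [hz h hS, Pi.single_zero]
    exact zero_mem _

theorem flowSum_mem_eventuallyPolynomial (hedge : Function.Surjective edge)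
    (P : MvPolynomial (Option H) ℚ) :
    flowSum ends b S t edge c P ∈
      eventuallyPolynomial (S.card - Module.finrank ℤ (boundary ℤ ends).range) := by
  induction S using Finset.strongInduction generalizing t c P with
  | H S ih =>
    by_cases hS : LinearIndepOn ℤ (edgeBoundary ℤ ends) S
    · rw [Nat.sub_eq_zero_of_le (card_le_finrank_range_boundary ends hS)]
      exact flowSum_mem_eventuallyPolynomial_of_linearIndepOn hS P
    · obtain ⟨z, hz, hzS, hz0⟩ := exists_cycle_of_not_linearIndepOn ends hS
      obtain ⟨Q, hQ⟩ := exists_flowSum_eq_flowSum_add_cycle_sub hedge hz hzS hz0 P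
      have hdel (i) (hi : i ∈ S) (t c P) : flowSum ends b (S.erase i) t edge c P ∈
          eventuallyPolynomial (S.card - 1 - Module.finrank ℤ (boundary ℤ ends).range) :=
        Finset.card_erase_of_mem hi ▸ ih _ (Finset.erase_ssubset hi) P
      rw [hQ]
      exact eventuallyPolynomial_anti (by omega)
        (flowSum_add_sub_mem_eventuallyPolynomial hdel (fun h => hzS (edge h)) Q)

end FlowSum

section Weighting

variable {V E ι : Type*} {r : ℕ}

/-- The flow of a weighting: an edge carries the residue of the weight of its first half. -/
def weightFlow (w : E × Bool → Fin r) (e : E) : ZMod r := ((w (e, false)).val : ZMod r)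

/-- The weighting of a flow: the two halves of an edge get opposite residues. -/
def flowWeight [NeZero r] (x : E → ZMod r) (h : E × Bool) : Fin r :=
  ⟨(if h.2 then -x h.1 else x h.1).val, ZMod.val_lt _⟩

/-- The lower ends of the intervals of representatives for which half-edge weights become
polynomial in the representatives: the weight of `(e, false)` is the representative of `x e` in
`[0, r)`, and that of `(e, true)` is `r` minus the representative of `x e` in `[1, r + 1)`. -/
def halfEdgeCut (h : E × Bool) : ℤ := if h.2 then 1 else 0

/-- A polynomial in the half-edge weights, expressed in the variables of `flowPoint` for the
lower ends `halfEdgeCut`. -/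
noncomputable def weightSubst :
    MvPolynomial (E × Bool) ℚ →ₐ[ℚ] MvPolynomial (Option (E × Bool)) ℚ :=
  bind₁ fun h => if h.2 then X none - X (some h) else X (some h)

lemma eval_flowPoint_weightSubst [NeZero r] (x : E → ZMod r) (W : MvPolynomial (E × Bool) ℚ) :
    eval (flowPoint Prod.fst halfEdgeCut x) (weightSubst W) =
      eval (fun h => ((flowWeight x h).val : ℚ)) W := by
  rw [weightSubst, eval_bind₁]
  congr 2 with ⟨e, _ | _⟩
  · simp [flowPoint, halfEdgeCut, flowWeight, icoLift_zero]
  · simp [flowPoint, halfEdgeCut, flowWeight, icoLift_one]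

lemma weightFlow_flowWeight [NeZero r] (x : E → ZMod r) : weightFlow (flowWeight x) = x := by
  ext e
  simp [weightFlow, flowWeight]

variable [DecidableEq V] [Fintype E] [Fintype ι] {ends : E → V × V} {leg : ι → V} {a : ι → ℤ}

variable (leg a) in
/-- Minus the total weight of the legs at `v`: the boundary of the flow of a weighting. -/
def legBoundary (v : V) : ℤ := -∑ i, if leg i = v then a i else 0

variable (ends leg a) in
/-- The conditions (R2) and (R3) on the weights of the half-edges; (R1) is built in by
using `a i` itself as the weight of the leg `i`. -/
def IsWeighting (w : E × Bool → Fin r) : Prop :=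
  (∀ e : E, (((w (e, false)).val : ZMod r) + ((w (e, true)).val : ZMod r) = 0)) ∧
    (∀ v : V,
      (∑ e : E, ((if (ends e).1 = v then ((w (e, false)).val : ZMod r) else 0)
          + (if (ends e).2 = v then ((w (e, true)).val : ZMod r) else 0)))
        + ∑ i : ι, (if leg i = v then (a i : ZMod r) else 0) = 0)

lemma flowWeight_weightFlow [NeZero r] {w : E × Bool → Fin r} (hw : IsWeighting ends leg a w) :
    flowWeight (weightFlow w) = w := by
  have hval (h) : ((w h).val : ZMod r).val = (w h).val := ZMod.val_cast_of_lt (w h).isLt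
  ext ⟨e, _ | _⟩
  · simp [flowWeight, weightFlow, hval]
  · simp [flowWeight, weightFlow, neg_eq_of_add_eq_zero_right (hw.1 e), hval]

variable [Fintype V] [DecidableEq E]

lemma isWeighting_flowWeight_iff [NeZero r] {x : E → ZMod r} :
    IsWeighting ends leg a (flowWeight x) ↔
      x ∈ flows ends r (legBoundary leg a) Finset.univ 0 := by
  simp [IsWeighting, mem_flows, funext_iff, boundary_apply, flowWeight, legBoundary,
    sub_eq_add_neg, eq_neg_iff_add_eq_zero, apply_ite (Int.cast : ℤ → ZMod r),
    apply_ite (Neg.neg : ZMod r → ZMod r)]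

open scoped Classical in
lemma sum_isWeighting_eq_flowSum (W : MvPolynomial (E × Bool) ℚ) (r : ℕ+) :
    (∑ w : E × Bool → Fin r,
      if IsWeighting ends leg a w then eval (fun h => ((w h).val : ℚ)) W else 0) =
      flowSum ends (legBoundary leg a) Finset.univ 0 Prod.fst halfEdgeCut (weightSubst W) r := by
  rw [← Finset.sum_filter, flowSum]
  refine Finset.sum_nbij' weightFlow flowWeight ?_ ?_ ?_ ?_ ?_
  · intro w hw
    rw [Finset.mem_filter_univ] at hw
    rwa [← isWeighting_flowWeight_iff, flowWeight_weightFlow hw]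
  · exact fun x hx => (Finset.mem_filter_univ _).2 (isWeighting_flowWeight_iff.2 hx)
  · exact fun w hw => flowWeight_weightFlow ((Finset.mem_filter_univ _).1 hw)
  · exact fun x _ => weightFlow_flowWeight x
  · intro w hw
    rw [eval_flowPoint_weightSubst, flowWeight_weightFlow ((Finset.mem_filter_univ _).1 hw)]

end Weighting

end Pixton

open Pixton in
open scoped Classical in
theorem pixton_polynomiality_general {V E ι : Type*} [Fintype V] [Fintype E] [Fintype ι]
    (ends : E → V × V) (leg : ι → V) (a : ι → ℤ) (W : MvPolynomial (E × Bool) ℚ) :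
    ∃ (P : Polynomial ℚ) (R0 : ℕ),
      Polynomial.X ^ (Fintype.card E +
          Nat.card (SimpleGraph.fromRel fun u v => ∃ e, ends e = (u, v)).ConnectedComponent -
          Fintype.card V) ∣ P ∧
      ∀ r : ℕ, R0 ≤ r →
        (∑ w : E × Bool → Fin r,
          if IsWeighting ends leg a w
          then MvPolynomial.eval (fun h => ((w h).val : ℚ)) W else 0)
        = P.eval (r : ℚ) := by
  have hrank := finrank_range_boundary_add_card_connectedComponent_le ends
  obtain ⟨P, hdvd, hP⟩ := flowSum_mem_eventuallyPolynomial (ends := ends) (S := Finset.univ)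
    (b := legBoundary leg a) (t := 0) (c := halfEdgeCut) Prod.fst_surjective (weightSubst W)
  obtain ⟨R0, hR0⟩ := Filter.eventually_atTop.1 hP
  refine ⟨P, R0, (pow_dvd_pow _ ?_).trans hdvd, fun r hr => ?_⟩
  · rw [Finset.card_univ]
    omega
  · lift r to ℕ+ using R0.pos.trans_le hr
    rw [sum_isWeighting_eq_flowSum]
    exact hR0 r hr

open scoped Classical in
/-- Pixton's polynomiality lemma: for a polynomial `W` in the half-edge weights, the sum
of `W` over all weight functions `w` on half-edges with values in `{0,…,r-1}` satisfying
(R1)-(R3) mod `r` is, for `r` sufficiently large, given by a polynomial `P` in `r`, and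
`P` is divisible by `r^{h¹(Γ)}` (with `h¹(Γ) = #E - #V + 1`).  Half-edges are modelled
as pairs `(e, b)` with `b : Bool` selecting an end of the edge `e`. -/
theorem pixton_polynomiality {V E ι : Type} [Fintype V] [Fintype E] [Fintype ι]
    (ends : E → V × V)
    (hconn : (SimpleGraph.fromRel (fun u v => ∃ e, ends e = (u, v))).Connected)
    (leg : ι → V) (a : ι → ℤ) (W : MvPolynomial (E × Bool) ℚ) :
    ∃ (P : Polynomial ℚ) (R0 : ℕ),
      Polynomial.X ^ (Fintype.card E + 1 - Fintype.card V) ∣ P ∧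
      ∀ r : ℕ, R0 ≤ r →
        (∑ w : E × Bool → Fin r,
          if ((∀ e : E, (((w (e, false)).val : ZMod r) + ((w (e, true)).val : ZMod r) = 0)) ∧
              (∀ v : V,
                (∑ e : E, ((if (ends e).1 = v then ((w (e, false)).val : ZMod r) else 0)
                    + (if (ends e).2 = v then ((w (e, true)).val : ZMod r) else 0)))
                  + ∑ i : ι, (if leg i = v then (a i : ZMod r) else 0) = 0))
          then MvPolynomial.eval (fun h => ((w h).val : ℚ)) W else 0)
        = P.eval (r : ℚ) := by
  convert pixton_polynomiality_general ends leg a W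
  · exact (Pixton.card_connectedComponent_eq_one hconn).symm
  · exact Iff.rfl
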